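/- The series ∑_{n=0}^∞ ζ(2n)/((2n+1)(2n+2)(2n+3)·4^n) equals -5ζ(3)/(8π²). -/

import Mathlib

open Real
noncomputable def zr (n : ℕ) : ℝ := if n = 0 then -1/2 else ∑' k : ℕ, 1 / ((k : ℝ) + 1) ^ (2 * n)

lemma zr_cast (n : ℕ) : (zr n : ℂ) = riemannZeta (2 * n) := by
  unfold zr
  split_ifs with h
  · subst h; simp [riemannZeta_zero]
  · have h2 : 1 < 2 * n := by omega
    have := zeta_eq_tsum_one_div_nat_add_one_cpow (s := ((2 * n : ℕ) : ℂ)) (by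
      rw [Complex.natCast_re]; exact_mod_cast h2)
    simp only [Complex.cpow_natCast] at this
    push_cast at this ⊢
    exact this.symm

lemma summ_sq : Summable (fun k : ℕ => 1 / ((k : ℝ) + 1) ^ 2) := by
  have := (summable_nat_add_iff 1).mpr (Real.summable_one_div_nat_pow.mpr (by norm_num : 1 < 2))
  simpa using this

lemma zr_bound : ∃ C : ℝ, ∀ n, |zr n| ≤ C := by
  refine ⟨(∑' k : ℕ, 1 / ((k : ℝ) + 1) ^ 2) + 1, fun n => ?_⟩
  have h0 : 0 ≤ ∑' k : ℕ, 1 / ((k : ℝ) + 1) ^ 2 := tsum_nonneg fun k => by positivity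
  unfold zr
  split_ifs with h
  · rw [abs_le]; constructor <;> linarith
  · rw [abs_of_nonneg (tsum_nonneg fun k => by positivity)]
    have hle : ∀ k : ℕ, 1 / ((k : ℝ) + 1) ^ (2 * n) ≤ 1 / ((k : ℝ) + 1) ^ 2 := fun k => by
      apply one_div_le_one_div_of_le (by positivity)
      exact pow_le_pow_right₀ (by linarith [k.cast_nonneg (α := ℝ)]) (by omega)
    have := (Summable.of_nonneg_of_le (fun k => by positivity) hle summ_sq).tsum_le_tsum hle summ_sq
    linarith

lemma cot_real {x : ℝ} (hx : 0 < x) (hx2 : x ≤ 1 / 2) :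
    π * Real.cot (π * x) - 1 / x = ∑' k : ℕ, -(2 / x) * (x ^ 2 / (((k : ℝ) + 1) ^ 2 - x ^ 2)) := by
  have hm : (x : ℂ) ∈ Complex.integerComplement := by
    rw [Complex.mem_integerComplement_iff]
    rintro ⟨n, hn⟩
    have hn : (n : ℝ) = x := by exact_mod_cast hn
    rw [← hn] at hx hx2
    have h1 : 0 < n := by exact_mod_cast hx
    have h2 : (1 : ℝ) ≤ n := by exact_mod_cast h1
    linarith
  have h := cot_series_rep' hm
  rw [← Complex.ofReal_inj]
  push_cast
  rw [h]
  congr 1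
  ext k
  have hk := k.cast_nonneg (α := ℝ)
  have e1 : (x : ℂ) - (k + 1) ≠ 0 := by
    have : x - (k + 1) ≠ 0 := by linarith
    exact_mod_cast this
  have e2 : (x : ℂ) + (k + 1) ≠ 0 := by
    have : x + (k + 1) ≠ 0 := by linarith
    exact_mod_cast this
  have e3 : ((k : ℂ) + 1) ^ 2 - x ^ 2 ≠ 0 := by
    have : ((k : ℂ) + 1) ^ 2 - x ^ 2 = - ((x - (k + 1)) * (x + (k + 1))) := by ring
    rw [this]; exact neg_ne_zero.mpr (mul_ne_zero e1 e2)
  have e4 : (x : ℂ) ≠ 0 := by exact_mod_cast hx.ne'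
  field_simp
  ring

lemma gen {x : ℝ} (hx : 0 < x) (hx2 : x ≤ 1 / 2) :
    ∑' n : ℕ, zr n * x ^ (2 * n) = -(π * x / 2) * Real.cot (π * x) := by
  obtain ⟨C, hC⟩ := zr_bound
  have hsum : Summable (fun n : ℕ => zr n * x ^ (2 * n)) := by
    apply Summable.of_norm_bounded (g := fun n : ℕ => C * (x ^ 2) ^ n)
    · exact (summable_geometric_of_lt_one (by positivity) (by nlinarith)).mul_left C
    · intro n
      rw [norm_mul, pow_mul, Real.norm_eq_abs, Real.norm_of_nonneg (by positivity)]
      exact mul_le_mul_of_nonneg_right (hC n) (by positivity)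
  let a : ℕ → ℕ → ℝ := fun k m => (x / ((k : ℝ) + 1)) ^ (2 * (m + 1))
  have hgeo : ∀ k : ℕ, HasSum (a k) (x ^ 2 / (((k : ℝ) + 1) ^ 2 - x ^ 2)) := by
    intro k
    have hk := k.cast_nonneg (α := ℝ)
    have hr : (x / ((k : ℝ) + 1)) ^ 2 < 1 := by
      rw [div_pow, div_lt_one (by positivity)]; nlinarith
    have := (hasSum_geometric_of_lt_one (by positivity) hr).mul_left ((x / ((k : ℝ) + 1)) ^ 2)
    convert! this using 1
    · ext m; simp only [a]; rw [pow_mul, pow_succ]; ring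
    · have : ((k : ℝ) + 1) ^ 2 - x ^ 2 ≠ 0 := by nlinarith
      rw [div_pow] at *
      have h3 : 1 - x ^ 2 / ((k : ℝ) + 1) ^ 2 = (((k : ℝ) + 1) ^ 2 - x ^ 2) / ((k : ℝ) + 1) ^ 2 := by
        field_simp
      rw [h3]
      field_simp
  have hS : Summable (fun k : ℕ => x ^ 2 / (((k : ℝ) + 1) ^ 2 - x ^ 2)) := by
    refine Summable.of_nonneg_of_le (fun k => ?_) (fun k => ?_) summ_sq
    · have hk := k.cast_nonneg (α := ℝ)
      apply div_nonneg (by positivity); nlinarith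
    · have hk := k.cast_nonneg (α := ℝ)
      have h1 : (1:ℝ) ≤ ((k : ℝ) + 1) ^ 2 := by nlinarith
      have h2 : x ^ 2 ≤ 1 / 4 := by nlinarith
      rw [div_le_div_iff₀ (by linarith) (by positivity)]
      nlinarith
  have hp : Summable (Function.uncurry a) := by
    rw [summable_prod_of_nonneg]
    · refine ⟨fun k => (hgeo k).summable, ?_⟩
      convert! hS using 2 with k
      exact (hgeo k).tsum_eq
    · intro p; simp only [Function.uncurry, a, Pi.zero_apply]; positivity
  have hcomm := hp.tsum_comm
  rw [tsum_congr (fun k => (hgeo k).tsum_eq)] at hcomm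
  have hc := cot_real hx hx2
  rw [tsum_mul_left, ← hcomm] at hc
  rw [hsum.tsum_eq_zero_add]
  have h4 : ∀ m : ℕ, zr (m + 1) * x ^ (2 * (m + 1)) = ∑' k, a k m := by
    intro m
    simp only [zr, a, Nat.add_eq_zero_iff, one_ne_zero, and_false, if_false]
    rw [← tsum_mul_right]
    congr 1; ext k; rw [div_pow]; ring
  rw [tsum_congr h4]
  have hz : zr 0 = -1/2 := by simp [zr]
  rw [hz]
  generalize (∑' m, ∑' k, a k m) = T at hc ⊢
  have : T = -(x/2) * (π * Real.cot (π * x) - 1 / x) := by rw [hc]; field_simp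
  rw [this]; field_simp; ring

noncomputable def ff (n : ℕ) (x : ℝ) : ℝ := zr n * x ^ (2 * n) * (1 - 2 * x) ^ 2
noncomputable def HH (x : ℝ) : ℝ := ∑' n : ℕ, ff n x

lemma ff_bound : ∃ C : ℝ, ∀ n : ℕ, ∀ x ∈ Set.Icc (0 : ℝ) (1 / 2), ‖ff n x‖ ≤ C * (1 / 4) ^ n := by
  obtain ⟨C, hC⟩ := zr_bound
  refine ⟨C, fun n x hx => ?_⟩
  have hx0 := hx.1
  have hx1 := hx.2
  have hC0 : 0 ≤ C := (abs_nonneg _).trans (hC 0)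
  unfold ff
  rw [norm_mul, norm_mul, pow_mul, Real.norm_eq_abs, Real.norm_of_nonneg (by positivity),
    Real.norm_of_nonneg (by positivity)]
  have h1 : (x ^ 2) ^ n ≤ (1 / 4) ^ n := pow_le_pow_left₀ (by positivity) (by nlinarith) n
  have h2 : (1 - 2 * x) ^ 2 ≤ 1 := by nlinarith
  calc |zr n| * (x ^ 2) ^ n * (1 - 2 * x) ^ 2 ≤ |zr n| * (x ^ 2) ^ n * 1 := by gcongr
    _ ≤ C * (1 / 4) ^ n := by rw [mul_one]; exact mul_le_mul (hC n) h1 (by positivity) hC0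

lemma summ_geo (C : ℝ) : Summable (fun n : ℕ => C * (1 / 4 : ℝ) ^ n) :=
  (summable_geometric_of_lt_one (by norm_num) (by norm_num)).mul_left C

lemma ff_cont (n : ℕ) : Continuous (ff n) := by unfold ff; fun_prop

lemma HH_cont : ContinuousOn HH (Set.Icc (0 : ℝ) (1 / 2)) := by
  obtain ⟨C, hC⟩ := ff_bound
  exact continuousOn_tsum (fun n => (ff_cont n).continuousOn) (summ_geo C) hC

lemma sum_int : HasSum (fun n => ∫ x in (0:ℝ)..(1/2), ff n x) (∫ x in (0:ℝ)..(1/2), HH x) := by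
  obtain ⟨C, hC⟩ := ff_bound
  have hmem : ∀ x ∈ Set.uIoc (0:ℝ) (1/2), x ∈ Set.Icc (0 : ℝ) (1 / 2) := fun x hx => by
    rw [Set.uIoc_of_le (by norm_num)] at hx; exact Set.Ioc_subset_Icc_self hx
  apply intervalIntegral.hasSum_integral_of_dominated_convergence (fun n _ => C * (1 / 4) ^ n)
  · intro n; exact (ff_cont n).aestronglyMeasurable
  · intro n; filter_upwards with x hx using hC n x (hmem x hx)
  · filter_upwards with x hx using summ_geo C
  · exact intervalIntegrable_const
  · filter_upwards with x hx
    exact (Summable.of_norm_bounded (summ_geo C) (fun n => hC n x (hmem x hx))).hasSum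

lemma int_ff (n : ℕ) : ∫ x in (0:ℝ)..(1/2), ff n x =
    zr n / ((2 * n + 1) * (2 * n + 2) * (2 * n + 3) * 4 ^ n) := by
  have hd : ∀ x ∈ Set.uIcc (0:ℝ) (1/2), HasDerivAt (fun x : ℝ => zr n *
      (x ^ (2 * n + 1) / (2 * n + 1) - 4 * (x ^ (2 * n + 2) / (2 * n + 2))
        + 4 * (x ^ (2 * n + 3) / (2 * n + 3)))) (ff n x) x := by
    intro x _
    have h1 := (hasDerivAt_pow (2 * n + 1) x).div_const (2 * n + 1 : ℝ)
    have h2 := ((hasDerivAt_pow (2 * n + 2) x).div_const (2 * n + 2 : ℝ)).const_mul 4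
    have h3 := ((hasDerivAt_pow (2 * n + 3) x).div_const (2 * n + 3 : ℝ)).const_mul 4
    convert! ((h1.sub h2).add h3).const_mul (zr n) using 1
    unfold ff
    push_cast
    have e1 : (2 * n + 1 : ℝ) ≠ 0 := by positivity
    have e2 : (2 * n + 2 : ℝ) ≠ 0 := by positivity
    have e3 : (2 * n + 3 : ℝ) ≠ 0 := by positivity
    have s1 : 2 * n + 1 - 1 = 2 * n := by omega
    have s2 : 2 * n + 2 - 1 = 2 * n + 1 := by omega
    have s3 : 2 * n + 3 - 1 = 2 * n + 2 := by omega
    simp only [s1, s2, s3, mul_div_right_comm, div_self e1, div_self e2, div_self e3]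
    ring
  rw [intervalIntegral.integral_eq_sub_of_hasDerivAt hd ((ff_cont n).intervalIntegrable _ _)]
  have e1 : (2 * n + 1 : ℝ) ≠ 0 := by positivity
  have e2 : (2 * n + 2 : ℝ) ≠ 0 := by positivity
  have e3 : (2 * n + 3 : ℝ) ≠ 0 := by positivity
  have h4 : ((1:ℝ) / 2) ^ (2 * n) = 1 / 4 ^ n := by rw [pow_mul, ← one_div_pow]; norm_num
  simp only [pow_add, h4]
  simp
  field_simp
  ring

lemma trig (y : ℝ) (N : ℕ) : cos y * (1 - cos (2 * N * y)) =
    sin y * (2 * (∑ k ∈ Finset.range (N + 1), sin (2 * k * y)) - sin (2 * N * y)) := by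
  induction N with
  | zero => simp
  | succ N ih =>
    rw [Finset.sum_range_succ]
    have hc : cos (2 * (N + 1 : ℕ) * y) = cos (2 * N * y) * cos (2 * y) - sin (2 * N * y) * sin (2 * y) := by
      rw [← cos_add]; push_cast; ring_nf
    have hs : sin (2 * (N + 1 : ℕ) * y) = sin (2 * N * y) * cos (2 * y) + cos (2 * N * y) * sin (2 * y) := by
      rw [← sin_add]; push_cast; ring_nf
    rw [hc, hs, sin_two_mul, cos_two_mul]
    have h1 := sin_sq_add_cos_sq y
    generalize (∑ k ∈ Finset.range (N + 1), sin (2 * k * y)) = S at *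
    generalize cos (2 * N * y) = c at *
    generalize sin (2 * N * y) = s at *
    generalize sin y = u at *
    generalize cos y = v at *
    have h2 : u ^ 2 = 1 - v ^ 2 := by linarith
    linear_combination ih + (2 * c * v) * (-h1)

noncomputable def pp (x : ℝ) : ℝ := x * (1 - 2 * x) ^ 2

lemma HH_eq {x : ℝ} (hx : x ∈ Set.Icc (0 : ℝ) (1 / 2)) (N : ℕ) :
    HH x - HH x * cos (2 * π * N * x) = -(π / 2) *
      (2 * (∑ k ∈ Finset.range (N + 1), pp x * sin (2 * π * k * x)) - pp x * sin (2 * π * N * x)) := by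
  rcases hx.1.eq_or_lt with h0 | h0
  · subst h0; simp
  · have hH : HH x = -(π * x / 2) * Real.cot (π * x) * (1 - 2 * x) ^ 2 := by
      unfold HH ff
      rw [tsum_mul_right, gen h0 hx.2]
    have hs : sin (π * x) ≠ 0 := by
      apply (sin_pos_of_pos_of_lt_pi (by positivity) _).ne'
      nlinarith [hx.2, pi_pos]
    have ht := trig (π * x) N
    rw [← Finset.mul_sum]
    have e : ∀ k : ℕ, 2 * π * k * x = 2 * k * (π * x) := fun k => by ring
    simp only [e]
    rw [hH, Real.cot_eq_cos_div_sin, pp]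
    generalize (∑ k ∈ Finset.range (N + 1), sin (2 * k * (π * x))) = S at *
    generalize cos (2 * N * (π * x)) = c at *
    generalize sin (2 * N * (π * x)) = s at *
    generalize sin (π * x) = u at *
    generalize cos (π * x) = v at *
    have key : v / u * (1 - c) = 2 * S - s := by
      rw [div_mul_eq_mul_div, ht, mul_div_cancel_left₀ _ hs]
    linear_combination (-(π * x / 2) * (1 - 2 * x) ^ 2) * key

lemma pp_int (k : ℕ) : ∫ x in (0:ℝ)..(1/2), pp x * sin (2 * π * k * x) =
    (4 * (-1) ^ k + 8) / (2 * π * k) ^ 3 := by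
  rcases Nat.eq_zero_or_pos k with h | h
  · subst h; simp
  have hk : (k : ℝ) ≠ 0 := by positivity
  set w : ℝ := 2 * π * k with hw
  have hw0 : w ≠ 0 := by positivity
  have hd : ∀ x ∈ Set.uIcc (0:ℝ) (1/2), HasDerivAt (fun x : ℝ =>
      -(x - 4 * x ^ 2 + 4 * x ^ 3) * cos (w * x) / w + (1 - 8 * x + 12 * x ^ 2) * sin (w * x) / w ^ 2
      + (-8 + 24 * x) * cos (w * x) / w ^ 3 - 24 * sin (w * x) / w ^ 4) (pp x * sin (w * x)) x := by
    intro x _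
    have hx := hasDerivAt_id x
    have hwx : HasDerivAt (fun x : ℝ => w * x) w x := by simpa using hx.const_mul w
    have hc := hwx.cos
    have hs := hwx.sin
    have p0 : HasDerivAt (fun x : ℝ => -(x - 4 * x ^ 2 + 4 * x ^ 3)) (-(1 - 8 * x + 12 * x ^ 2)) x := by
      convert! ((hx.sub ((hasDerivAt_pow 2 x).const_mul 4)).add ((hasDerivAt_pow 3 x).const_mul 4)).neg using 1
      norm_num; ring
    have p1 : HasDerivAt (fun x : ℝ => (1 - 8 * x + 12 * x ^ 2)) (-8 + 24 * x) x := by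
      convert! ((hx.const_mul 8).const_sub 1).add ((hasDerivAt_pow 2 x).const_mul 12) using 1
      norm_num; ring
    have p2 : HasDerivAt (fun x : ℝ => (-8 + 24 * x)) 24 x := by
      convert! (hx.const_mul 24).const_add (-8) using 1
      norm_num
    convert! ((((p0.mul hc).div_const w).add ((p1.mul hs).div_const (w ^ 2))).add
      ((p2.mul hc).div_const (w ^ 3))).sub ((hs.const_mul 24).div_const (w ^ 4)) using 1
    unfold pp
    field_simp
    ring
  rw [intervalIntegral.integral_eq_sub_of_hasDerivAt hd
    (Continuous.intervalIntegrable (by unfold pp; fun_prop) _ _)]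
  have e : w * (1 / 2) = k * π := by rw [hw]; ring
  rw [e, cos_nat_mul_pi, sin_nat_mul_pi]
  simp
  field_simp
  ring

lemma RL : Filter.Tendsto (fun N : ℕ => ∫ x in (0:ℝ)..(1/2), HH x * cos (2 * π * N * x))
    Filter.atTop (nhds 0) := by
  have h := Real.tendsto_integral_exp_smul_cocompact
    ((Set.Ioc (0:ℝ) (1/2)).indicator (fun x => (HH x : ℂ)))
  have hN : Filter.Tendsto (fun N : ℕ => (N : ℝ)) Filter.atTop (Filter.cocompact ℝ) :=
    tendsto_natCast_atTop_atTop.mono_right atTop_le_cocompact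
  have h2 := (Complex.continuous_re.tendsto 0).comp (h.comp hN)
  simp only [Complex.zero_re] at h2
  refine h2.congr fun N => ?_
  simp only [Function.comp]
  rw [intervalIntegral.integral_of_le (by norm_num)]
  have h3 : (fun v : ℝ => Real.fourierChar (-(v * N)) • ((Set.Ioc (0:ℝ) (1/2)).indicator (fun x => (HH x : ℂ)) v))
    = (Set.Ioc (0:ℝ) (1/2)).indicator (fun v => Real.fourierChar (-(v * N)) • (HH v : ℂ)) := by
    ext v; by_cases hv : v ∈ Set.Ioc (0:ℝ) (1/2) <;> simp [Set.indicator]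
  rw [h3, MeasureTheory.integral_indicator measurableSet_Ioc]
  have hint : MeasureTheory.IntegrableOn (fun v => Real.fourierChar (-(v * N)) • (HH v : ℂ)) (Set.Ioc (0:ℝ) (1/2)) := by
    apply MeasureTheory.IntegrableOn.mono_set _ Set.Ioc_subset_Icc_self
    apply ContinuousOn.integrableOn_Icc
    simp only [Circle.smul_def, Real.fourierChar_apply]
    apply ContinuousOn.fun_smul
    · fun_prop
    · exact Complex.continuous_ofReal.comp_continuousOn HH_cont
  rw [← Complex.reCLM_apply, ← ContinuousLinearMap.integral_comp_comm Complex.reCLM hint]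
  simp only [Complex.reCLM_apply]
  congr 1
  ext v
  simp only [Circle.smul_def, Real.fourierChar_apply, smul_eq_mul, Complex.re_mul_ofReal]
  rw [Complex.exp_ofReal_mul_I_re, mul_comm]
  congr 1
  rw [← cos_neg]; congr 1; ring

lemma sum_I : HasSum (fun k : ℕ => (4 * (-1) ^ k + 8) / (2 * π * k) ^ 3)
    (5 * (∑' k : ℕ, 1 / (k : ℝ) ^ 3) / (8 * π ^ 3)) := by
  have hz := (Real.summable_one_div_nat_pow.mpr (by norm_num : 1 < 3)).hasSum
  set Z := ∑' k : ℕ, 1 / (k : ℝ) ^ 3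
  have he : HasSum (fun k : ℕ => if Even k then 8 / (k : ℝ) ^ 3 else 0) Z := by
    have hi : Function.Injective (fun j : ℕ => 2 * j) := fun a b h => by simpa using h
    rw [← hi.hasSum_iff]
    · convert! hz using 1
      ext j
      simp
      rw [mul_pow]
      rcases Nat.eq_zero_or_pos j with h | h
      · subst h; simp
      · field_simp; norm_num
    · intro k hk
      rw [if_neg]
      rintro ⟨j, hj⟩
      exact hk ⟨j, by simp; omega⟩
  convert! ((hz.mul_left 4).add he).div_const (8 * π ^ 3) using 1
  · ext k
    rcases Nat.even_or_odd k with h | h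
    · rw [if_pos h, h.neg_one_pow]; rw [mul_pow, mul_pow]
      rcases Nat.eq_zero_or_pos k with h | h
      · subst h; simp
      · field_simp; norm_num
    · rw [if_neg (Nat.not_even_iff_odd.mpr h), h.neg_one_pow]; rw [mul_pow, mul_pow]
      have : (k : ℝ) ≠ 0 := by have := h.pos; positivity
      field_simp; norm_num
  · ring

lemma int_HH : ∫ x in (0:ℝ)..(1/2), HH x = -π * (5 * (∑' k : ℕ, 1 / (k : ℝ) ^ 3) / (8 * π ^ 3)) := by
  have hI : ∀ N : ℕ, (∫ x in (0:ℝ)..(1/2), HH x) - (∫ x in (0:ℝ)..(1/2), HH x * cos (2 * π * N * x))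
      = -(π / 2) * (2 * (∑ k ∈ Finset.range (N + 1), (4 * (-1) ^ k + 8) / (2 * π * k) ^ 3)
        - (4 * (-1) ^ N + 8) / (2 * π * N) ^ 3) := by
    intro N
    have hpc : ∀ k : ℕ, IntervalIntegrable (fun x => pp x * sin (2 * π * k * x)) MeasureTheory.volume 0 (1/2) :=
      fun k => Continuous.intervalIntegrable (by unfold pp; fun_prop) _ _
    have hu : Set.uIcc (0:ℝ) (1/2) = Set.Icc 0 (1/2) := Set.uIcc_of_le (by norm_num)
    rw [← intervalIntegral.integral_sub]
    · rw [intervalIntegral.integral_congr (g := fun x => -(π / 2) *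
        (2 * (∑ k ∈ Finset.range (N + 1), pp x * sin (2 * π * k * x)) - pp x * sin (2 * π * N * x)))
        (fun x hx => HH_eq (hu ▸ hx) N)]
      rw [intervalIntegral.integral_const_mul, intervalIntegral.integral_sub _ (hpc N),
        intervalIntegral.integral_const_mul, intervalIntegral.integral_finsetSum (fun k _ => hpc k)]
      · simp only [pp_int]
      · exact Continuous.intervalIntegrable (by unfold pp; fun_prop) _ _
    · apply ContinuousOn.intervalIntegrable; rw [hu]; exact HH_cont
    · apply ContinuousOn.intervalIntegrable; rw [hu]; exact HH_cont.mul (by fun_prop)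
  have l1 := (tendsto_const_nhds (x := ∫ x in (0:ℝ)..(1/2), HH x)).sub RL
  have l2 := (((sum_I.tendsto_sum_nat.comp (Filter.tendsto_add_atTop_nat 1)).const_mul 2).sub
    sum_I.summable.tendsto_atTop_zero).const_mul (-(π / 2))
  have := tendsto_nhds_unique l1 (l2.congr fun N => (hI N).symm)
  rw [sub_zero] at this
  rw [this]; ring

theorem stmt15 :
    ∑' n : ℕ, riemannZeta (2 * n) / ((2 * n + 1) * (2 * n + 2) * (2 * n + 3) * 4 ^ n) =
      -5 * riemannZeta 3 / (8 * (π : ℂ) ^ 2) := by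
  have h := sum_int.tsum_eq
  rw [int_HH] at h
  simp only [int_ff] at h
  have h3 := zeta_nat_eq_tsum_of_gt_one (k := 3) (by norm_num)
  have hc := congrArg (fun x : ℝ => (x : ℂ)) h
  push_cast at hc h3
  simp only [zr_cast] at hc
  rw [hc, h3]
  have : (π : ℂ) ≠ 0 := by exact_mod_cast pi_ne_zero
  field_simp
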